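/- For a probability measure F supported on [0,∞) with finite first moment and mean m > 0, the Gini index G(F) = 1 - (1/m)∫₀^∞ (1-F(x))² dx admits the Fourier representation G(F) = 1 - (1/(2πm)) ∫_ℝ |1 - f̂(ξ)|²/ξ² dξ. -/

import Mathlib

open MeasureTheory Complex

/-- Fourier transform `f̂(ξ) = ∫ e^{-iξx} dF(x)` of a measure on `ℝ`. -/
noncomputable def ft (μ : Measure ℝ) (ξ : ℝ) : ℂ :=
  ∫ x, Complex.exp (-(Complex.I * ξ * x)) ∂μ

/-- Derivative of the Fourier transform: `f̂'(ξ) = -i ∫ x e^{-iξx} dF(x)`. -/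
noncomputable def ft' (μ : Measure ℝ) (ξ : ℝ) : ℂ :=
  ∫ x, -(Complex.I * x) * Complex.exp (-(Complex.I * ξ * x)) ∂μ

/-- The Fourier-based inequality index `T(F) = (1/2) sup_ξ |f̂(ξ) - f̂'(ξ)/f̂'(0)|`. -/
noncomputable def Tindex (μ : Measure ℝ) : ℝ :=
  (1 / 2) * ⨆ ξ : ℝ, ‖ft μ ξ - ft' μ ξ / ft' μ 0‖


open scoped FourierTransform SchwartzMap in
theorem gini_planch (g : ℝ → ℂ) (h1 : Integrable g) (h2 : MemLp g 2 volume) :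
    ∫ w, ‖𝓕 g w‖ ^ 2 = ∫ x, ‖g x‖ ^ 2 := by
  have hnorm : ∀ f : Lp ℂ 2 (volume : Measure ℝ), ‖f‖ ^ 2 = ∫ x, ‖f x‖ ^ 2 := by
    intro f
    apply Complex.ofReal_injective
    have := inner_self_eq_norm_sq_to_K (𝕜 := ℂ) f
    rw [L2.inner_def] at this
    simp only [inner_self_eq_norm_sq_to_K] at this
    push_cast
    rw [← integral_complex_ofReal]
    simpa using this.symm
  have hcont : Continuous (𝓕 g) :=
    VectorFourier.fourierIntegral_continuous Real.continuous_fourierChar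
      (innerSL ℝ).continuous₂ h1
  have hae : (𝓕 (h2.toLp g) : Lp ℂ 2 (volume : Measure ℝ)) =ᵐ[volume] 𝓕 g := by
    apply ae_eq_of_integral_contDiff_smul_eq
    · exact (Lp.memLp _).locallyIntegrable (by norm_num)
    · exact hcont.locallyIntegrable
    · intro φ hφ hs
      have hs' : HasCompactSupport (Complex.ofRealCLM ∘ φ) := hs.comp_left rfl
      have hφ' : ContDiff ℝ (⊤ : ℕ∞) (Complex.ofRealCLM ∘ φ) := by fun_prop
      set Φ : 𝓢(ℝ, ℂ) := hs'.toSchwartzMap hφ' with hΦ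
      have hΦa : ∀ x, Φ x = (φ x : ℂ) := fun x => rfl
      have key := congrArg (fun T : 𝓢'(ℝ, ℂ) => T Φ)
        (Lp.fourier_toTemperedDistribution_eq (h2.toLp g))
      simp only [TemperedDistribution.fourier_apply, Lp.toTemperedDistribution_apply] at key
      have e1 : ∫ x, φ x • (𝓕 (h2.toLp g) : Lp ℂ 2 (volume : Measure ℝ)) x
          = ∫ x, Φ x • (𝓕 (h2.toLp g) : Lp ℂ 2 (volume : Measure ℝ)) x := by
        simp [hΦa]
      have e2 : ∫ x, φ x • 𝓕 g x = ∫ x, Φ x • 𝓕 g x := by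
        simp [hΦa]
      rw [e1, e2, ← key]
      have e3 : ∫ x, (𝓕 Φ) x • (h2.toLp g) x = ∫ x, (𝓕 Φ) x • g x := by
        apply integral_congr_ae
        filter_upwards [h2.coeFn_toLp] with x hx
        rw [hx]
      rw [e3]
      simpa using! VectorFourier.integral_fourierIntegral_smul_eq_flip (L := innerₗ ℝ)
        Real.continuous_fourierChar continuous_inner Φ.integrable h1
  have a := hnorm (𝓕 (h2.toLp g))
  rw [Lp.norm_fourier_eq, hnorm] at a
  have b1 : ∫ x, ‖(h2.toLp g) x‖ ^ 2 = ∫ x, ‖g x‖ ^ 2 := by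
    apply integral_congr_ae
    filter_upwards [h2.coeFn_toLp] with x hx
    rw [hx]
  have b2 : ∫ x, ‖(𝓕 (h2.toLp g) : Lp ℂ 2 (volume : Measure ℝ)) x‖ ^ 2 = ∫ x, ‖𝓕 g x‖ ^ 2 := by
    apply integral_congr_ae
    filter_upwards [hae] with x hx
    rw [hx]
  rw [← b1, ← b2, a]

theorem gini_joint (μ : Measure ℝ) [IsProbabilityMeasure μ]
    (hint : Integrable (fun x : ℝ => x) μ) (c : ℝ) :
    Integrable (fun p : ℝ × ℝ => {q : ℝ × ℝ | 0 < q.2 ∧ q.2 < q.1}.indicator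
      (fun q => Complex.exp ((c * q.2 : ℝ) * Complex.I)) p) (μ.prod volume) := by
  have hS : MeasurableSet {q : ℝ × ℝ | 0 < q.2 ∧ q.2 < q.1} :=
    (measurableSet_lt measurable_const measurable_snd).inter
      (measurableSet_lt measurable_snd measurable_fst)
  have hmeas : AEStronglyMeasurable (fun p : ℝ × ℝ => {q : ℝ × ℝ | 0 < q.2 ∧ q.2 < q.1}.indicator
      (fun q => Complex.exp ((c * q.2 : ℝ) * Complex.I)) p) (μ.prod volume) := by
    apply AEStronglyMeasurable.indicator _ hS
    exact Continuous.aestronglyMeasurable (by fun_prop)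
  have hslice : ∀ x : ℝ, (fun t : ℝ => {q : ℝ × ℝ | 0 < q.2 ∧ q.2 < q.1}.indicator
      (fun q => Complex.exp ((c * q.2 : ℝ) * Complex.I)) (x, t))
      = (Set.Ioo 0 x).indicator (fun t : ℝ => Complex.exp ((c * t : ℝ) * Complex.I)) := by
    intro x; ext t
    simp [Set.indicator_apply]
  rw [integrable_prod_iff hmeas]
  constructor
  · refine Filter.Eventually.of_forall fun x => ?_
    simp only [hslice]
    rw [integrable_indicator_iff measurableSet_Ioo]
    exact (Continuous.integrableOn_Icc (by fun_prop)).mono_set Set.Ioo_subset_Icc_self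
  · have : ∀ x : ℝ, ∫ t, ‖{q : ℝ × ℝ | 0 < q.2 ∧ q.2 < q.1}.indicator
      (fun q => Complex.exp ((c * q.2 : ℝ) * Complex.I)) (x, t)‖ = max x 0 := by
      intro x
      have h := hslice x
      have : (fun t : ℝ => ‖{q : ℝ × ℝ | 0 < q.2 ∧ q.2 < q.1}.indicator
        (fun q => Complex.exp ((c * q.2 : ℝ) * Complex.I)) (x, t)‖)
        = (Set.Ioo 0 x).indicator (fun _ => (1 : ℝ)) := by
        ext t
        rw [congrFun h t, norm_indicator_eq_indicator_norm]
        simp only [Complex.norm_exp_ofReal_mul_I]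
      rw [this, integral_indicator measurableSet_Ioo]
      simp [Measure.real, ENNReal.toReal_ofReal']
    simp only [this]
    exact hint.pos_part

theorem gini_tail (μ : Measure ℝ) [IsProbabilityMeasure μ] (x : ℝ) :
    1 - (μ (Set.Iic x)).toReal = μ.real (Set.Ioi x) := by
  rw [← Set.compl_Iic, probReal_compl_eq_one_sub measurableSet_Iic]; rfl

theorem gini_inner (μ : Measure ℝ) [IsProbabilityMeasure μ] (c t : ℝ) :
    ∫ x, {q : ℝ × ℝ | 0 < q.2 ∧ q.2 < q.1}.indicator
      (fun q => Complex.exp ((c * q.2 : ℝ) * Complex.I)) (x, t) ∂μ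
    = Complex.exp ((c * t : ℝ) * Complex.I) *
      (Set.Ioi (0 : ℝ)).indicator (fun t => ((μ.real (Set.Ioi t) : ℝ) : ℂ)) t := by
  have : (fun x : ℝ => {q : ℝ × ℝ | 0 < q.2 ∧ q.2 < q.1}.indicator
      (fun q => Complex.exp ((c * q.2 : ℝ) * Complex.I)) (x, t))
      = (Set.Ioi t).indicator (fun _ => (Set.Ioi (0:ℝ)).indicator
        (fun t : ℝ => Complex.exp ((c * t : ℝ) * Complex.I)) t) := by
    ext x
    simp only [Set.indicator_apply, Set.mem_setOf_eq, Set.mem_Ioi]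
    split_ifs <;> simp_all
  rw [this, integral_indicator measurableSet_Ioi, setIntegral_const]
  by_cases h : 0 < t <;> simp [Set.indicator_apply, h, mul_comm]

theorem gini_integrable (μ : Measure ℝ) [IsProbabilityMeasure μ]
    (hint : Integrable (fun x : ℝ => x) μ) :
    Integrable ((Set.Ioi (0 : ℝ)).indicator (fun t => ((μ.real (Set.Ioi t) : ℝ) : ℂ))) := by
  have h := (gini_joint μ hint 0).integral_prod_right
  simp only [gini_inner] at h
  simpa using h

open scoped FourierTransform in
theorem gini_fourier (μ : Measure ℝ) [IsProbabilityMeasure μ]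
    (hsupp : μ {x : ℝ | x < 0} = 0)
    (hint : Integrable (fun x : ℝ => x) μ) (w : ℝ) (hw : w ≠ 0) :
    𝓕 ((Set.Ioi (0 : ℝ)).indicator (fun t => ((μ.real (Set.Ioi t) : ℝ) : ℂ))) w
      = (1 - ft μ (2 * Real.pi * w)) / (2 * Real.pi * w * Complex.I) := by
  have hc : ((-2 * Real.pi * w : ℝ) : ℂ) * Complex.I ≠ 0 := by
    simp [hw, Real.pi_ne_zero]
  rw [Real.fourier_real_eq_integral_exp_smul]
  have e1 : ∀ v : ℝ, Complex.exp (((-2 * Real.pi * v * w : ℝ) : ℂ) * Complex.I) •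
      (Set.Ioi (0 : ℝ)).indicator (fun t => ((μ.real (Set.Ioi t) : ℝ) : ℂ)) v
      = ∫ x, {q : ℝ × ℝ | 0 < q.2 ∧ q.2 < q.1}.indicator
      (fun q => Complex.exp (((-2 * Real.pi * w) * q.2 : ℝ) * Complex.I)) (x, v) ∂μ := by
    intro v
    rw [gini_inner, smul_eq_mul]
    congr 4
    ring
  simp only [e1]
  rw [integral_integral_swap (f := fun v x => {q : ℝ × ℝ | 0 < q.2 ∧ q.2 < q.1}.indicator
      (fun q => Complex.exp (((-2 * Real.pi * w) * q.2 : ℝ) * Complex.I)) (x, v))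
      (gini_joint μ hint (-2 * Real.pi * w)).swap]
  have e2 : ∀ᵐ x ∂μ, ∫ v, {q : ℝ × ℝ | 0 < q.2 ∧ q.2 < q.1}.indicator
      (fun q => Complex.exp (((-2 * Real.pi * w) * q.2 : ℝ) * Complex.I)) (x, v)
      = (1 - Complex.exp (-(Complex.I * (2 * Real.pi * w : ℝ) * x)))
        / (2 * Real.pi * w * Complex.I) := by
    have hx0 : ∀ᵐ x ∂μ, 0 ≤ x := by
      rw [ae_iff]; simpa using hsupp
    filter_upwards [hx0] with x hx
    have : (fun t : ℝ => {q : ℝ × ℝ | 0 < q.2 ∧ q.2 < q.1}.indicator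
      (fun q => Complex.exp (((-2 * Real.pi * w) * q.2 : ℝ) * Complex.I)) (x, t))
      = (Set.Ioo 0 x).indicator
        (fun t : ℝ => Complex.exp (((-2 * Real.pi * w : ℝ) * Complex.I) * t)) := by
      ext t
      simp only [Set.indicator_apply, Set.mem_setOf_eq, Set.mem_Ioo]
      congr 2
      push_cast; ring
    rw [this, integral_indicator measurableSet_Ioo, ← integral_Ioc_eq_integral_Ioo,
      ← intervalIntegral.integral_of_le hx, integral_exp_mul_complex hc]
    have hx1 : ((-2 * Real.pi * w : ℝ) * Complex.I) * (x : ℂ)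
      = -(Complex.I * (2 * Real.pi * w : ℝ) * x) := by push_cast; ring
    have hx2 : (2 * Real.pi * w * Complex.I : ℂ) = - ((-2 * Real.pi * w : ℝ) * Complex.I) := by
      push_cast; ring
    rw [hx1, hx2, div_neg, ← neg_div]
    simp
  rw [integral_congr_ae e2, integral_div, integral_sub (integrable_const _), ft]
  · simp
  · apply (integrable_const (1 : ℝ)).mono' (Continuous.aestronglyMeasurable (by fun_prop))
    refine Filter.Eventually.of_forall fun x => ?_
    rw [Complex.norm_exp]
    simp

theorem stmt_17 (μ : Measure ℝ) [IsProbabilityMeasure μ]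
    (hsupp : μ {x : ℝ | x < 0} = 0)
    (hint : Integrable (fun x : ℝ => x) μ)
    (m : ℝ) (hm : m = ∫ x, x ∂μ) (hmpos : 0 < m) :
    1 - (1 / m) * ∫ x in Set.Ioi (0 : ℝ), (1 - (μ (Set.Iic x)).toReal) ^ 2
      = 1 - (1 / (2 * Real.pi * m)) * ∫ ξ : ℝ, ‖1 - ft μ ξ‖ ^ 2 / ξ ^ 2 := by

  have hpi := Real.pi_pos
  set g : ℝ → ℂ := (Set.Ioi (0 : ℝ)).indicator (fun t => ((μ.real (Set.Ioi t) : ℝ) : ℂ)) with hg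
  have h1 : Integrable g := gini_integrable μ hint
  have hle : ∀ x, ‖g x‖ ≤ 1 := by
    intro x
    rw [hg, norm_indicator_eq_indicator_norm]
    apply Set.indicator_le' (fun _ _ => _) (fun _ _ => zero_le_one)
    intro y _
    rw [Complex.norm_real, Real.norm_of_nonneg measureReal_nonneg]
    exact measureReal_le_one
  have h2 : MemLp g 2 volume := by
    rw [memLp_two_iff_integrable_sq_norm h1.aestronglyMeasurable]
    apply h1.norm.mono' (by fun_prop)
    refine Filter.Eventually.of_forall fun x => ?_
    rw [Real.norm_of_nonneg (by positivity)]
    nlinarith [hle x, norm_nonneg (g x)]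
  have hP := gini_planch g h1 h2
  have hR : ∫ x, ‖g x‖ ^ 2 = ∫ x in Set.Ioi (0 : ℝ), (1 - (μ (Set.Iic x)).toReal) ^ 2 := by
    rw [← integral_indicator measurableSet_Ioi]
    congr 1; ext x
    rw [hg]
    by_cases h : 0 < x <;> simp [Set.indicator_apply, h, gini_tail]
  have hL : ∫ w, ‖FourierTransform.fourier g w‖ ^ 2
      = (2 * Real.pi)⁻¹ * ∫ ξ : ℝ, ‖1 - ft μ ξ‖ ^ 2 / ξ ^ 2 := by
    have := Measure.integral_comp_mul_left (fun ξ : ℝ => ‖1 - ft μ ξ‖ ^ 2 / ξ ^ 2) (2 * Real.pi)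
    rw [abs_of_pos (by positivity), smul_eq_mul] at this
    rw [← this]
    apply integral_congr_ae
    have h0 : ∀ᵐ w : ℝ, w ≠ 0 := by simp [ae_iff]
    filter_upwards [h0] with w hw
    rw [hg, gini_fourier μ hsupp hint w hw, norm_div, div_pow]
    congr 1
    simp [mul_pow]
  rw [← hR, ← hP, hL]
  field_simp
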